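/- The function d ↦ γ(d) is strictly decreasing on the integers d ≥ 2: for every integer d ≥ 2, γ(d+1) < γ(d), where γ(d) = 2^{d-2} · d² · Γ(d/2)² / (j_{d/2-1, 1})^d. -/

import Mathlib

/-- The Bessel function of the first kind `J_ν`, defined for real order `ν`
by its power series (interpreted with real powers `(x/2)^(2k+ν)`). -/
noncomputable def besselJ (ν x : ℝ) : ℝ :=
  ∑' k : ℕ, (-1 : ℝ) ^ k / (k.factorial * Real.Gamma ((k : ℝ) + ν + 1)) *
    (x / 2) ^ (2 * (k : ℝ) + ν)

/-- `j_{ν,1}`: the smallest positive zero of the Bessel function `J_ν`. -/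
noncomputable def besselJZero1 (ν : ℝ) : ℝ := sInf {r : ℝ | 0 < r ∧ besselJ ν r = 0}

/-- The Pleijel constant `γ(d) = 2^{d-2} d² Γ(d/2)² / (j_{d/2-1,1})^d`. -/
noncomputable def pleijelGamma (d : ℕ) : ℝ :=
  2 ^ ((d : ℝ) - 2) * (d : ℝ) ^ 2 * Real.Gamma ((d : ℝ) / 2) ^ 2 /
    besselJZero1 ((d : ℝ) / 2 - 1) ^ (d : ℝ)

/-!
In the variable `y = x² / 4` the Bessel function is `J_ν(x) = (x / 2)^ν F_ν(y)` with `F_ν` entire,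
so with `z_ν = j_{ν,1}² / 4` and `Γ(x + 1/2)² ≤ x Γ(x)²` (log-convexity) the claim reduces to
`(d + 1)⁴ z_μ ^ d < 4 d² z_ν ^ (d + 1)`, where `μ = d / 2 - 1` and `ν = μ + 1 / 2`.

The zeros are compared à la Sturm: if `z_ν < K z_μ`, the Wronskian of `y^(ν/2) F_ν(y)` and
`y^((μ+a)/2) F_μ(y / K)` is negative at `z_ν`, while Bessel's equation makes it nondecreasing from
`0` as soon as a first-order inequality for `F_μ` holds on `(0, z_μ)`. With `a = 0` this gives
`z_μ + (ν² - μ²) / 4 ≤ z_ν`, which by `e n y x ^ n ≤ (x + y) ^ (n + 1)` suffices for `d ≥ 18`. With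
`a = 2 / 5` it gives `(1 + c / d) z_μ ≤ z_ν` for a suitable constant `c`, which suffices for the
remaining `d` once combined with a lower bound for `z_ν`: `(ν + 2) (ν + 3) / 4` for `ν ≥ 1`, and
`π² / 4` for `ν = 1 / 2`, as `J_{1/2}` is a multiple of `sin x / √x`.
-/

open Real Set

/-- The `k`-th term of the power series of `besselClifford ν y`. -/
noncomputable def besselCliffordTerm (ν y : ℝ) (k : ℕ) : ℝ :=
  (-y) ^ k / (k.factorial * Gamma (k + ν + 1))

/-- The Bessel–Clifford function `F_ν(y) = ∑ₖ (-y)ᵏ / (k! Γ(k + ν + 1))`, which carries the zeros of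
`J_ν` because `J_ν(x) = (x / 2)^ν F_ν(x² / 4)`. The sign of `y` is opposite to the usual convention,
so that the zeros are positive. -/
noncomputable def besselClifford (ν y : ℝ) : ℝ := ∑' k : ℕ, besselCliffordTerm ν y k

/-- The smallest positive zero `z_ν` of `F_ν`, equal to `j_{ν,1}² / 4`. -/
noncomputable def besselCliffordZero (ν : ℝ) : ℝ := sInf {y : ℝ | 0 < y ∧ besselClifford ν y = 0}

section Series

variable {ν : ℝ}

lemma natCast_add_add_one_pos (hν : -1 < ν) (k : ℕ) : 0 < (k : ℝ) + ν + 1 := by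
  linarith [k.cast_nonneg (α := ℝ)]

lemma besselCliffordTerm_eq_mul_add_one (hν : -1 < ν) (y : ℝ) (k : ℕ) :
    besselCliffordTerm ν y k = (k + ν + 1) * besselCliffordTerm (ν + 1) y k := by
  have hk := natCast_add_add_one_pos hν k
  rw [besselCliffordTerm, besselCliffordTerm, ← add_assoc (k : ℝ), Gamma_add_one hk.ne']
  field_simp [(Gamma_pos_of_pos hk).ne']

lemma succ_mul_besselCliffordTerm_succ (ν y : ℝ) (k : ℕ) :
    (k + 1) * besselCliffordTerm ν y (k + 1) = -y * besselCliffordTerm (ν + 1) y k := by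
  rw [besselCliffordTerm, besselCliffordTerm, Nat.factorial_succ, Nat.cast_mul, Nat.cast_succ,
    show (k : ℝ) + 1 + ν + 1 = k + (ν + 1) + 1 by ring]
  field_simp
  ring

lemma hasDerivAt_besselCliffordTerm_succ (ν y : ℝ) (k : ℕ) :
    HasDerivAt (fun z ↦ besselCliffordTerm ν z (k + 1)) (-besselCliffordTerm (ν + 1) y k) y := by
  have h := ((hasDerivAt_neg y).pow (k + 1)).div_const
    ((k + 1).factorial * Gamma ((k + 1 : ℕ) + ν + 1))
  refine h.congr_deriv ?_
  rw [besselCliffordTerm, Nat.factorial_succ, Nat.cast_mul, Nat.cast_succ,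
    show (k : ℝ) + 1 + ν + 1 = k + (ν + 1) + 1 by ring, Nat.add_sub_cancel]
  field_simp

lemma summable_besselCliffordTerm (hν : -1 < ν) (y : ℝ) :
    Summable (besselCliffordTerm ν y) := by
  refine summable_of_ratio_norm_eventually_le (r := 1 / 2) (by norm_num) ?_
  filter_upwards [Filter.eventually_ge_atTop 1,
    tendsto_natCast_atTop_atTop.eventually_ge_atTop (2 * |y|)] with k hk hky
  have hk1 : (1 : ℝ) ≤ k := by exact_mod_cast hk
  have hpos := natCast_add_add_one_pos hν k
  have hratio : (k + 1) * (k + ν + 1) * besselCliffordTerm ν y (k + 1) =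
      -y * besselCliffordTerm ν y k := by
    rw [mul_right_comm, succ_mul_besselCliffordTerm_succ,
      besselCliffordTerm_eq_mul_add_one hν y k]
    ring
  have hnorm := congrArg norm hratio
  rw [norm_mul, norm_of_nonneg (by positivity), norm_mul, norm_neg, Real.norm_eq_abs y] at hnorm
  have hden : 2 * |y| ≤ (k + 1) * (k + ν + 1) := by nlinarith [hk1]
  have hdenpos : 0 < (k + 1) * (k + ν + 1) := by positivity
  refine le_of_mul_le_mul_left ?_ hdenpos
  rw [hnorm]
  nlinarith [mul_le_mul_of_nonneg_right hden (norm_nonneg (besselCliffordTerm ν y k))]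

lemma besselClifford_zero_pos (hν : -1 < ν) : 0 < besselClifford ν 0 := by
  rw [besselClifford, tsum_eq_single 0 (fun k hk ↦ by simp [besselCliffordTerm, hk])]
  simpa [besselCliffordTerm] using Gamma_pos_of_pos (by linarith : 0 < ν + 1)

lemma besselClifford_eq_sub (hν : -1 < ν) (y : ℝ) :
    besselClifford ν y =
      (ν + 1) * besselClifford (ν + 1) y - y * besselClifford (ν + 2) y := by
  have h0 := summable_besselCliffordTerm hν y
  have h1 := (summable_besselCliffordTerm (ν := ν + 1) (by linarith) y).mul_left (ν + 1)
  have hterm (k : ℕ) : besselCliffordTerm ν y k - (ν + 1) * besselCliffordTerm (ν + 1) y k =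
      k * besselCliffordTerm (ν + 1) y k := by
    rw [besselCliffordTerm_eq_mul_add_one hν]
    ring
  have hshift : ∑' k : ℕ, k * besselCliffordTerm (ν + 1) y k = -y * besselClifford (ν + 2) y := by
    have hs := h0.sub h1
    simp_rw [hterm] at hs
    rw [hs.tsum_eq_zero_add, besselClifford, ← tsum_mul_left]
    simp only [Nat.cast_succ, succ_mul_besselCliffordTerm_succ, Nat.cast_zero, zero_mul, zero_add]
    ring_nf
  have hsub := h0.tsum_sub h1
  simp_rw [hterm] at hsub
  rw [hshift, tsum_mul_left] at hsub
  unfold besselClifford at hsub ⊢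
  linarith

lemma hasDerivAt_besselClifford (hν : -1 < ν) (y : ℝ) :
    HasDerivAt (besselClifford ν) (-besselClifford (ν + 1) y) y := by
  have hr : 0 < |y| + 1 := by positivity
  have htail : HasDerivAt (fun z ↦ ∑' k, besselCliffordTerm ν z (k + 1))
      (∑' k, -besselCliffordTerm (ν + 1) y k) y := by
    refine hasDerivAt_tsum_of_isPreconnected
      (summable_besselCliffordTerm (ν := ν + 1) (by linarith) (|y| + 1)).norm
      Metric.isOpen_ball (convex_ball 0 (|y| + 1)).isPreconnected
      (fun k z _ ↦ hasDerivAt_besselCliffordTerm_succ ν z k) (fun k z hz ↦ ?_)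
      (Metric.mem_ball_self hr)
      ((summable_nat_add_iff 1).2 (summable_besselCliffordTerm hν 0)) (by simp)
    rw [mem_ball_zero_iff, Real.norm_eq_abs] at hz
    simp only [besselCliffordTerm, norm_neg, norm_div, norm_pow, Real.norm_eq_abs, abs_of_pos hr]
    gcongr
  have hsplit : besselClifford ν =
      fun z ↦ 1 / Gamma (ν + 1) + ∑' k, besselCliffordTerm ν z (k + 1) := by
    ext z
    rw [besselClifford, (summable_besselCliffordTerm hν z).tsum_eq_zero_add]
    simp [besselCliffordTerm]
  rw [hsplit, besselClifford, ← tsum_neg]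
  exact htail.const_add _

lemma continuous_besselClifford (hν : -1 < ν) : Continuous (besselClifford ν) :=
  continuous_iff_continuousAt.2 fun y ↦ (hasDerivAt_besselClifford hν y).continuousAt

lemma hasDerivAt_id_mul_besselClifford_add_one (hν : -1 < ν) (y : ℝ) :
    HasDerivAt (fun z ↦ z * besselClifford (ν + 1) z)
      (besselClifford ν y - ν * besselClifford (ν + 1) y) y := by
  have h := (hasDerivAt_id' y).mul (hasDerivAt_besselClifford (ν := ν + 1) (by linarith) y)
  refine h.congr_deriv ?_
  rw [besselClifford_eq_sub hν, show ν + 1 + 1 = ν + 2 by ring]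
  ring

end Series

section Monotonicity

lemma hasDerivAt_rpow_mul {s y f' : ℝ} {f : ℝ → ℝ} (hy : y ≠ 0) (hf : HasDerivAt f f' y) :
    HasDerivAt (fun z ↦ z ^ s * f z) (y ^ (s - 1) * (s * f y + y * f')) y := by
  refine ((hasDerivAt_rpow_const (p := s) (Or.inl hy)).mul hf).congr_deriv ?_
  rw [rpow_sub_one hy]
  field_simp

lemma nonneg_of_forall_nonneg_mul_add_mul_deriv {s b : ℝ} {f f' : ℝ → ℝ} (hs : 0 < s) (hb : 0 < b)
    (hf : ∀ y, HasDerivAt f (f' y) y) (h : ∀ y ∈ Ioo 0 b, 0 ≤ s * f y + y * f' y) :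
    0 ≤ f b := by
  have hcont : Continuous f := continuous_iff_continuousAt.2 fun y ↦ (hf y).continuousAt
  have hmono : MonotoneOn (fun y ↦ y ^ s * f y) (Icc 0 b) := by
    refine monotoneOn_of_hasDerivWithinAt_nonneg (convex_Icc 0 b)
      (f' := fun y ↦ y ^ (s - 1) * (s * f y + y * f' y))
      ((continuous_rpow_const hs.le).mul hcont).continuousOn ?_ ?_ <;>
    simp only [interior_Icc]
    · exact fun y hy ↦ (hasDerivAt_rpow_mul hy.1.ne' (hf y)).hasDerivWithinAt
    · exact fun y hy ↦ mul_nonneg (rpow_nonneg hy.1.le _) (h y hy)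
  have h0b := hmono (left_mem_Icc.2 hb.le) (right_mem_Icc.2 hb.le) hb.le
  simp only [zero_rpow hs.ne', zero_mul] at h0b
  exact nonneg_of_mul_nonneg_right h0b (rpow_pos_of_pos hb s)

end Monotonicity

section Positivity

variable {ν Y : ℝ}

lemma hasDerivAt_rpow_mul_besselClifford_add_one (hν : -1 < ν) {y : ℝ} (hy : 0 < y) :
    HasDerivAt (fun z ↦ z ^ (ν + 1) * besselClifford (ν + 1) z)
      (y ^ ν * besselClifford ν y) y := by
  refine (hasDerivAt_rpow_mul hy.ne'
    (hasDerivAt_besselClifford (ν := ν + 1) (by linarith) y)).congr_deriv ?_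
  rw [add_sub_cancel_right, besselClifford_eq_sub hν, show ν + 1 + 1 = ν + 2 by ring]
  ring

lemma besselClifford_add_one_pos (hν : -1 < ν) (h : ∀ z ∈ Ioo 0 Y, 0 < besselClifford ν z)
    {y : ℝ} (hy : y ∈ Ioc 0 Y) : 0 < besselClifford (ν + 1) y := by
  have hν1 : 0 < ν + 1 := by linarith
  have hmono : StrictMonoOn (fun z ↦ z ^ (ν + 1) * besselClifford (ν + 1) z) (Icc 0 Y) := by
    refine strictMonoOn_of_hasDerivWithinAt_pos (convex_Icc 0 Y)
      (f' := fun z ↦ z ^ ν * besselClifford ν z)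
      ((continuous_rpow_const hν1.le).mul
        (continuous_besselClifford (by linarith))).continuousOn ?_ ?_ <;>
    simp only [interior_Icc]
    · exact fun z hz ↦ (hasDerivAt_rpow_mul_besselClifford_add_one hν hz.1).hasDerivWithinAt
    · exact fun z hz ↦ mul_pos (rpow_pos_of_pos hz.1 _) (h z hz)
  have h0y := hmono (left_mem_Icc.2 (hy.1.le.trans hy.2)) (Ioc_subset_Icc_self hy) hy.1
  simp only [zero_rpow hν1.ne', zero_mul] at h0y
  exact pos_of_mul_pos_right h0y (rpow_nonneg hy.1.le _)

lemma besselClifford_add_two_pos (hν : -1 < ν) (h : ∀ z ∈ Ioo 0 Y, 0 < besselClifford ν z)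
    {y : ℝ} (hy : y ∈ Ioo 0 Y) : 0 < besselClifford (ν + 2) y := by
  rw [show ν + 2 = ν + 1 + 1 by ring]
  exact besselClifford_add_one_pos (by linarith)
    (fun z hz ↦ besselClifford_add_one_pos hν h (Ioo_subset_Ioc_self hz)) (Ioo_subset_Ioc_self hy)

lemma besselClifford_le_mul_add_one (hν : -1 < ν) (h : ∀ z ∈ Ioo 0 Y, 0 < besselClifford ν z)
    {y : ℝ} (hy : y ∈ Ioo 0 Y) :
    besselClifford ν y ≤ (ν + 1) * besselClifford (ν + 1) y := by
  rw [besselClifford_eq_sub hν]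
  exact sub_le_self _ (mul_pos hy.1 (besselClifford_add_two_pos hν h hy)).le

lemma besselClifford_le_mul_add_two (hν : -1 < ν) (h : ∀ z ∈ Ioo 0 Y, 0 < besselClifford ν z)
    {y : ℝ} (hy : y ∈ Ioo 0 Y) :
    besselClifford ν y ≤ ((ν + 1) * (ν + 2) - y) * besselClifford (ν + 2) y := by
  have h1 := besselClifford_le_mul_add_one (ν := ν + 1) (by linarith)
    (fun z hz ↦ besselClifford_add_one_pos hν h (Ioo_subset_Ioc_self hz)) hy
  rw [show ν + 1 + 1 = ν + 2 by ring] at h1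
  rw [besselClifford_eq_sub hν]
  linarith [mul_le_mul_of_nonneg_left h1 (by linarith : 0 ≤ ν + 1)]

lemma mul_besselClifford_le_mul_add_one (hν : -1 < ν)
    (h : ∀ z ∈ Ioo 0 Y, 0 < besselClifford ν z) {y : ℝ} (hy : y ∈ Ioo 0 Y) :
    ((ν + 1) * (ν + 2) + y) * besselClifford ν y ≤
      (ν + 1) ^ 2 * (ν + 2) * besselClifford (ν + 1) y := by
  have h2 := mul_le_mul_of_nonneg_left (besselClifford_le_mul_add_two hν h hy) hy.1.le
  have hsq : 0 ≤ y ^ 2 * besselClifford (ν + 2) y :=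
    mul_nonneg (sq_nonneg y) (besselClifford_add_two_pos hν h hy).le
  have hrec := congrArg ((ν + 1) * (ν + 2) * ·) (besselClifford_eq_sub hν y)
  linarith

end Positivity

section FirstZero

variable {ν : ℝ}

lemma exists_besselClifford_eq_zero_of_nonpos (hν : -1 < ν) {y : ℝ} (hy : 0 < y)
    (hneg : besselClifford ν y ≤ 0) : ∃ w ∈ Ioc 0 y, besselClifford ν w = 0 := by
  obtain ⟨w, hw, hw0⟩ := intermediate_value_Ioc' hy.le
    (continuous_besselClifford hν).continuousOn ⟨hneg, besselClifford_zero_pos hν⟩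
  exact ⟨w, hw, hw0⟩

lemma exists_pos_besselClifford_eq_zero (hν : -1 < ν) : ∃ y, 0 < y ∧ besselClifford ν y = 0 := by
  by_contra! hne
  have hpos (z : ℝ) (hz : 0 < z) : 0 < besselClifford ν z := by
    by_contra! hneg
    obtain ⟨w, hw, hw0⟩ := exists_besselClifford_eq_zero_of_nonpos hν hz hneg
    exact hne w hw.1 hw0
  have hY : 0 < (ν + 1) * (ν + 2) := mul_pos (by linarith) (by linarith)
  have hle := besselClifford_le_mul_add_two hν (Y := (ν + 1) * (ν + 2) + 1)
    (fun z hz ↦ hpos z hz.1) ⟨hY, lt_add_one _⟩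
  rw [sub_self, zero_mul] at hle
  exact hle.not_gt (hpos _ hY)

lemma isLeast_besselCliffordZero (hν : -1 < ν) :
    IsLeast {y | 0 < y ∧ besselClifford ν y = 0} (besselCliffordZero ν) := by
  have hset : {y | 0 < y ∧ besselClifford ν y = 0} = Ici 0 ∩ besselClifford ν ⁻¹' {0} := by
    ext y
    refine ⟨fun h ↦ ⟨h.1.le, h.2⟩, fun h ↦ ⟨h.1.lt_of_ne' ?_, h.2⟩⟩
    rintro rfl
    exact (besselClifford_zero_pos hν).ne' h.2
  have hclosed : IsClosed {y | 0 < y ∧ besselClifford ν y = 0} :=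
    hset ▸ isClosed_Ici.inter (isClosed_singleton.preimage (continuous_besselClifford hν))
  have hbdd : BddBelow {y | 0 < y ∧ besselClifford ν y = 0} := ⟨0, fun _ hy ↦ hy.1.le⟩
  exact ⟨hclosed.csInf_mem (exists_pos_besselClifford_eq_zero hν) hbdd, fun _ ↦ csInf_le hbdd⟩

lemma besselCliffordZero_pos (hν : -1 < ν) : 0 < besselCliffordZero ν :=
  (isLeast_besselCliffordZero hν).1.1

lemma besselClifford_besselCliffordZero (hν : -1 < ν) :
    besselClifford ν (besselCliffordZero ν) = 0 :=
  (isLeast_besselCliffordZero hν).1.2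

lemma besselClifford_pos_of_mem_Ioo (hν : -1 < ν) {y : ℝ} (hy : y ∈ Ioo 0 (besselCliffordZero ν)) :
    0 < besselClifford ν y := by
  by_contra! hneg
  obtain ⟨w, hw, hw0⟩ := exists_besselClifford_eq_zero_of_nonpos hν hy.1 hneg
  exact (hw.2.trans_lt hy.2).not_ge ((isLeast_besselCliffordZero hν).2 ⟨hw.1, hw0⟩)

lemma besselClifford_add_one_pos_of_le_zero (hν : -1 < ν) {y : ℝ}
    (hy : y ∈ Ioc 0 (besselCliffordZero ν)) : 0 < besselClifford (ν + 1) y :=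
  besselClifford_add_one_pos hν (fun _ ↦ besselClifford_pos_of_mem_Ioo hν) hy

end FirstZero

section LowerBound

variable {ν : ℝ}

lemma besselClifford_add_one_le_mul_of_sq_le (hν : -1 < ν) {β y : ℝ} (hβ : 0 ≤ β)
    (hy : y ∈ Ioc 0 (besselCliffordZero ν)) (h : (1 / (ν + 1) + β * y) ^ 2 ≤ β * (ν + 2)) :
    besselClifford (ν + 1) y ≤ (1 / (ν + 1) + β * y) * besselClifford ν y := by
  have hp : 0 < ν + 1 := by linarith
  -- `b z = 1 / (ν + 1) + β z` is a supersolution of the Riccati equation of `F_{ν+1} / F_ν` with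
  -- the same value at `0`; the integrating factor `E` cancels the terms `b F_{ν+1}` below.
  let E : ℝ → ℝ := fun z ↦ exp (-(z / (ν + 1) + β / 2 * z ^ 2))
  have hE (z : ℝ) : HasDerivAt E (E z * -(1 / (ν + 1) + β * z)) z := by
    refine HasDerivAt.exp (HasDerivAt.neg ?_)
    refine (((hasDerivAt_id' z).div_const _).add
      ((hasDerivAt_pow 2 z).const_mul _)).congr_deriv ?_
    ring
  have hb (z : ℝ) : HasDerivAt (fun w ↦ 1 / (ν + 1) + β * w) β z :=
    (((hasDerivAt_id' z).const_mul β).const_add _).congr_deriv (mul_one β)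
  have hbarrier : 0 ≤ E y *
      ((1 / (ν + 1) + β * y) * besselClifford ν y - besselClifford (ν + 1) y) := by
    refine nonneg_of_forall_nonneg_mul_add_mul_deriv
      (f := fun z ↦ E z * ((1 / (ν + 1) + β * z) * besselClifford ν z - besselClifford (ν + 1) z))
      hp hy.1 (fun z ↦ (hE z).mul (((hb z).mul (hasDerivAt_besselClifford hν z)).sub
        (hasDerivAt_besselClifford (ν := ν + 1) (by linarith) z))) fun z hz ↦ ?_
    have hF := besselClifford_pos_of_mem_Ioo hν (Ioo_subset_Ioo_right hy.2 hz)
    have hz0 : 0 ≤ z := hz.1.le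
    have hsq : (1 / (ν + 1) + β * z) ^ 2 ≤ β * (ν + 2) :=
      le_trans (by gcongr; exact hz.2.le) h
    have hbz : (ν + 1) * (1 / (ν + 1) + β * z) = 1 + (ν + 1) * β * z := by field_simp
    have hnonneg : 0 ≤ E z * (z * besselClifford ν z *
        (β * (ν + 2) - (1 / (ν + 1) + β * z) ^ 2)) :=
      mul_nonneg (exp_pos _).le (mul_nonneg (mul_nonneg hz0 hF.le) (sub_nonneg.2 hsq))
    refine hnonneg.trans_eq ?_
    rw [show ν + 1 + 1 = ν + 2 by ring]
    linear_combination -E z * besselClifford_eq_sub hν z - E z * besselClifford ν z * hbz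
  exact sub_nonneg.1 ((mul_nonneg_iff_of_pos_left (exp_pos _)).1 hbarrier)

lemma mul_besselClifford_add_one_le_two_mul (hν : -1 < ν) {y : ℝ}
    (hy : y ∈ Ioc 0 (besselCliffordZero ν)) (hy4 : 4 * y ≤ (ν + 1) * (ν + 2)) :
    (ν + 1) * besselClifford (ν + 1) y ≤ 2 * besselClifford ν y := by
  have hp : 0 < ν + 1 := by linarith
  have hy0 : 0 < y := hy.1
  have hslope : 1 / (ν + 1) + 1 / ((ν + 1) * y) * y = 2 / (ν + 1) := by field_simp; norm_num
  have hle := besselClifford_add_one_le_mul_of_sq_le hν (β := 1 / ((ν + 1) * y)) (by positivity)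
    hy (by
      rw [hslope, div_pow, one_div_mul_eq_div, div_le_div_iff₀ (by positivity) (by positivity)]
      nlinarith)
  rw [hslope, div_mul_eq_mul_div, le_div_iff₀ hp] at hle
  linarith

lemma besselCliffordZero_lt_add_one (hν : -1 < ν) :
    besselCliffordZero ν < besselCliffordZero (ν + 1) := by
  have hν1 : -1 < ν + 1 := by linarith
  by_contra! hle
  have hpos := besselClifford_add_one_pos_of_le_zero hν ⟨besselCliffordZero_pos hν1, hle⟩
  exact hpos.ne' (besselClifford_besselCliffordZero hν1)

lemma add_two_mul_add_three_le_four_mul_besselCliffordZero (hν : 1 ≤ ν) :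
    (ν + 2) * (ν + 3) ≤ 4 * besselCliffordZero ν := by
  by_contra! hlt
  have hν' : -1 < ν := by linarith
  set z := besselCliffordZero ν with hz
  have hmem : z ∈ Ioc 0 z := right_mem_Ioc.2 (besselCliffordZero_pos hν')
  have h2 := mul_besselClifford_add_one_le_two_mul (ν := ν + 1) (by linarith)
    ⟨hmem.1, (besselCliffordZero_lt_add_one hν').le⟩ (by linarith : 4 * z ≤ _)
  have hrec := besselClifford_eq_sub hν' z
  rw [hz, besselClifford_besselCliffordZero hν', ← hz] at hrec
  rw [show ν + 1 + 1 = ν + 2 by ring] at h2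
  have hF1 := besselClifford_add_one_pos_of_le_zero hν' hmem
  have hmul : (ν + 1) * (ν + 2) * besselClifford (ν + 1) z ≤ 2 * z * besselClifford (ν + 1) z := by
    linarith [mul_le_mul_of_nonneg_left h2 hmem.1.le, congrArg ((ν + 2) * ·) hrec]
  nlinarith [le_of_mul_le_mul_right hmul hF1]

end LowerBound

section Comparison

variable {μ ν a K : ℝ}

/-- The Wronskian `(θ u) v - u (θ v)` of `u = y^(ν/2) F_ν(y)` and `v = y^((μ+a)/2) F_μ(y / K)` for
the Euler operator `θ = y d/dy`, with the factor `y^((μ+ν+a)/2)` divided out. It drives the Sturm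
comparison of the first zeros of `F_ν` and `F_μ`. -/
noncomputable def besselWronskian (μ ν a K y : ℝ) : ℝ :=
  (ν - μ - a) / 2 * (besselClifford ν y * besselClifford μ (y / K)) -
    y * besselClifford (ν + 1) y * besselClifford μ (y / K) +
    besselClifford ν y * (y / K * besselClifford (μ + 1) (y / K))

lemma exists_hasDerivAt_besselWronskian (hμ : -1 < μ) (hν : -1 < ν) (hK : K ≠ 0) (y : ℝ) :
    ∃ w, HasDerivAt (besselWronskian μ ν a K) w y ∧
      (μ + ν + a) / 2 * besselWronskian μ ν a K y + y * w =
        besselClifford ν y * ((ν ^ 2 - (μ + a) ^ 2) / 4 * besselClifford μ (y / K) +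
          a * (y / K) * besselClifford (μ + 1) (y / K) -
          (K - 1) * (y / K) * besselClifford μ (y / K)) := by
  have hscale {f : ℝ → ℝ} {f' : ℝ} (hf : HasDerivAt f f' (y / K)) :
      HasDerivAt (fun z ↦ f (z / K)) (f' / K) y :=
    (hf.comp (h := fun z ↦ z / K) y ((hasDerivAt_id' y).div_const K)).congr_deriv
      (mul_one_div f' K)
  have hu := hasDerivAt_besselClifford hν y
  have hv := hscale (hasDerivAt_besselClifford hμ (y / K))
  have hu' := hasDerivAt_id_mul_besselClifford_add_one hν y
  have hv' := hscale (hasDerivAt_id_mul_besselClifford_add_one hμ (y / K))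
  refine ⟨_, (((hu.mul hv).const_mul _).sub (hu'.mul hv)).add (hu.mul hv'), ?_⟩
  unfold besselWronskian
  field_simp
  ring

lemma mul_besselCliffordZero_le (hμ : -1 < μ) (hν : -1 < ν) (hs : 0 < μ + ν + a) (hK : 0 < K)
    (hcond : ∀ y ∈ Ioo 0 (besselCliffordZero μ), (K - 1) * y * besselClifford μ y ≤
      (ν ^ 2 - (μ + a) ^ 2) / 4 * besselClifford μ y + a * y * besselClifford (μ + 1) y) :
    K * besselCliffordZero μ ≤ besselCliffordZero ν := by
  by_contra! hlt
  have hzν := besselCliffordZero_pos hν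
  have hmem {y : ℝ} (hy : y ∈ Ioc 0 (besselCliffordZero ν)) :
      y / K ∈ Ioo 0 (besselCliffordZero μ) :=
    ⟨div_pos hy.1 hK, (div_lt_iff₀' hK).2 (hy.2.trans_lt hlt)⟩
  choose W' hW' hW'_eq using exists_hasDerivAt_besselWronskian (a := a) hμ hν hK.ne'
  have hnonneg : 0 ≤ besselWronskian μ ν a K (besselCliffordZero ν) := by
    refine nonneg_of_forall_nonneg_mul_add_mul_deriv (half_pos hs) hzν hW' fun y hy ↦ ?_
    rw [hW'_eq]
    exact mul_nonneg (besselClifford_pos_of_mem_Ioo hν hy).le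
      (sub_nonneg.2 (hcond _ (hmem (Ioo_subset_Ioc_self hy))))
  have hν1 := besselClifford_add_one_pos_of_le_zero hν (right_mem_Ioc.2 hzν)
  have hμpos := besselClifford_pos_of_mem_Ioo hμ (hmem (right_mem_Ioc.2 hzν))
  have hneg : 0 < besselCliffordZero ν * besselClifford (ν + 1) (besselCliffordZero ν) *
      besselClifford μ (besselCliffordZero ν / K) := by positivity
  simp only [besselWronskian, besselClifford_besselCliffordZero hν, zero_mul, mul_zero] at hnonneg
  linarith

lemma besselCliffordZero_add_le (hμ : -1 < μ) (hμν : μ ≤ ν) (hs : 0 < μ + ν) :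
    besselCliffordZero μ + (ν ^ 2 - μ ^ 2) / 4 ≤ besselCliffordZero ν := by
  have hz := besselCliffordZero_pos hμ
  have hB : 0 ≤ (ν ^ 2 - μ ^ 2) / 4 := by nlinarith
  have hK : (1 + (ν ^ 2 - μ ^ 2) / 4 / besselCliffordZero μ) * besselCliffordZero μ =
      besselCliffordZero μ + (ν ^ 2 - μ ^ 2) / 4 := by field_simp
  rw [← hK]
  refine mul_besselCliffordZero_le (a := 0) hμ (hμ.trans_le hμν) (by linarith) (by positivity)
    fun y hy ↦ ?_
  rw [add_sub_cancel_left, add_zero, zero_mul, zero_mul, add_zero]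
  have hF := (besselClifford_pos_of_mem_Ioo hμ hy).le
  gcongr
  rw [div_mul_eq_mul_div, div_le_iff₀ hz]
  exact mul_le_mul_of_nonneg_left hy.2.le hB

lemma one_add_div_mul_besselCliffordZero_le {c : ℝ} (hμ : -1 < μ) (hν : -1 < ν)
    (hs : 0 < μ + ν + a) (ha : 0 < a) (hc0 : 0 < μ + 1 + c)
    (hc : (c - a) ^ 2 * (μ + 2) ≤ a * (ν ^ 2 - (μ + a) ^ 2)) :
    (1 + c / (μ + 1)) * besselCliffordZero μ ≤ besselCliffordZero ν := by
  have hp : 0 < μ + 1 := by linarith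
  have hp' : 0 < μ + 2 := by linarith
  refine mul_besselCliffordZero_le hμ hν hs (by rw [one_add_div hp.ne']; exact div_pos hc0 hp)
    fun y hy ↦ ?_
  have hF := besselClifford_pos_of_mem_Ioo hμ hy
  have hratio := mul_besselClifford_le_mul_add_one hμ
    (fun _ ↦ besselClifford_pos_of_mem_Ioo hμ) hy
  set w := y / (μ + 1) with hw
  have hy_eq : y = w * (μ + 1) := by rw [hw]; field_simp
  have hquad : 0 ≤ a * w ^ 2 - (c - a) * (μ + 2) * w + (ν ^ 2 - (μ + a) ^ 2) / 4 * (μ + 2) := by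
    have hsq : a * (a * w ^ 2 - (c - a) * (μ + 2) * w +
        (ν ^ 2 - (μ + a) ^ 2) / 4 * (μ + 2)) = (a * w - (c - a) * (μ + 2) / 2) ^ 2 +
        (μ + 2) / 4 * (a * (ν ^ 2 - (μ + a) ^ 2) - (c - a) ^ 2 * (μ + 2)) := by ring
    refine (mul_nonneg_iff_of_pos_left ha).1 ?_
    rw [hsq]
    exact add_nonneg (sq_nonneg _) (mul_nonneg (by positivity) (sub_nonneg.2 hc))
  have hmul : (μ + 1) ^ 2 * (μ + 2) * (c / (μ + 1) * y * besselClifford μ y) ≤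
      (μ + 1) ^ 2 * (μ + 2) * ((ν ^ 2 - (μ + a) ^ 2) / 4 * besselClifford μ y +
        a * y * besselClifford (μ + 1) y) := by
    have h1 := mul_le_mul_of_nonneg_left hratio (mul_nonneg ha.le hy.1.le)
    have h2 := mul_nonneg (mul_nonneg (sq_nonneg (μ + 1)) hquad) hF.le
    have h3 : c / (μ + 1) * y = c * w := by rw [hy_eq]; field_simp
    rw [h3]
    rw [hy_eq] at h1 h2 ⊢
    linarith
  rw [add_sub_cancel_left]
  exact le_of_mul_le_mul_left hmul (by positivity)

end Comparison

section HalfOrder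

lemma sqrt_pi_mul_mul_besselClifford_half {y : ℝ} (hy : 0 ≤ y) :
    √(π * y) * besselClifford (1 / 2) y = sin (2 * √y) := by
  rw [besselClifford, ← tsum_mul_left, ← (hasSum_sin (2 * √y)).tsum_eq]
  congr 1
  ext k
  have hGamma : k.factorial * Gamma (k + 1 / 2 + 1) =
      (2 * k + 1).factorial * √π / 2 ^ (2 * k + 1) := by
    have h := Gamma_mul_Gamma_add_half ((k : ℝ) + 1)
    have h2 : Gamma (2 * ((k : ℝ) + 1)) = (2 * k + 1).factorial := by
      rw [← Gamma_nat_eq_factorial]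
      push_cast
      ring_nf
    rw [Gamma_nat_eq_factorial, h2, show 1 - 2 * ((k : ℝ) + 1) = -((2 * k + 1 : ℕ) : ℝ) by
      push_cast; ring, rpow_neg two_pos.le, rpow_natCast, add_right_comm (k : ℝ)] at h
    rw [h]
    ring
  rw [besselCliffordTerm, hGamma, sqrt_mul pi_pos.le, neg_pow, mul_pow 2, pow_succ √y, pow_mul √y,
    sq_sqrt hy]
  field_simp

lemma besselCliffordZero_half : besselCliffordZero (1 / 2) = π ^ 2 / 4 := by
  refine IsLeast.csInf_eq ⟨⟨by positivity, ?_⟩, fun y ⟨hy, hy0⟩ ↦ ?_⟩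
  · have h := sqrt_pi_mul_mul_besselClifford_half (y := π ^ 2 / 4) (by positivity)
    rw [show 2 * √(π ^ 2 / 4) = π by
      rw [show π ^ 2 / 4 = (π / 2) ^ 2 by ring, sqrt_sq (by positivity)]; ring, sin_pi] at h
    exact (mul_eq_zero.1 h).resolve_left (by positivity)
  · by_contra! hlt
    have hsin := sqrt_pi_mul_mul_besselClifford_half hy.le
    rw [hy0, mul_zero] at hsin
    have hsqrt : √y < π / 2 := (sqrt_lt' (by positivity)).2 (by linarith)
    exact (sin_pos_of_pos_of_lt_pi (by positivity) (by linarith)).ne hsin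

end HalfOrder

section KeyInequality

lemma exp_one_mul_mul_pow_le_add_pow_succ {x y : ℝ} (hx : 0 < x) (hy : 0 ≤ y) (n : ℕ) :
    exp 1 * (n * y * x ^ n) ≤ (x + y) ^ (n + 1) := by
  set v := y / (x + y) with hv
  have hyv : y = v * (x + y) := by rw [hv]; field_simp
  have hxv : x = (1 - v) * (x + y) := by linarith
  have hx_exp : 1 - v ≤ exp (-v) := by linarith [add_one_le_exp (-v)]
  have hv_exp : n * v ≤ exp (n * v - 1) := by linarith [add_one_le_exp (n * v - 1)]
  have hv1 : 0 ≤ 1 - v := (pos_of_mul_pos_left (hxv ▸ hx) (by positivity)).le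
  calc exp 1 * (n * y * x ^ n)
      = exp 1 * (n * (v * (x + y)) * ((1 - v) * (x + y)) ^ n) := by rw [← hyv, ← hxv]
    _ = exp 1 * (n * v * (1 - v) ^ n) * (x + y) ^ (n + 1) := by
        rw [mul_pow]
        ring
    _ ≤ exp 1 * (exp (n * v - 1) * exp (-v) ^ n) * (x + y) ^ (n + 1) := by gcongr
    _ = (x + y) ^ (n + 1) := by
        rw [← exp_nat_mul, ← exp_add, ← exp_add,
          show 1 + (n * v - 1 + n * -v) = 0 by ring, exp_zero, one_mul]

variable {d : ℕ}

lemma pow_mul_besselCliffordZero_lt_of_mul {c Y : ℝ} (hd : 2 ≤ d) (hc0 : 0 ≤ c)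
    (hc : (c - 4 / 5) ^ 2 * (d + 2) ≤ 8 / 25 * (d - 11 / 10))
    (hY : Y ≤ besselCliffordZero ((d + 1) / 2 - 1))
    (hnum : (d + 1 : ℝ) ^ 4 < 4 * d ^ 2 * (1 + c / d) ^ d * Y) :
    (d + 1 : ℝ) ^ 4 * besselCliffordZero (d / 2 - 1) ^ d <
      4 * d ^ 2 * besselCliffordZero ((d + 1) / 2 - 1) ^ (d + 1) := by
  have hd2 : (2 : ℝ) ≤ d := by exact_mod_cast hd
  have hz := besselCliffordZero_pos (ν := (d : ℝ) / 2 - 1) (by linarith)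
  have hz' := besselCliffordZero_pos (ν := ((d : ℝ) + 1) / 2 - 1) (by linarith)
  have hscale := one_add_div_mul_besselCliffordZero_le (μ := (d : ℝ) / 2 - 1)
    (ν := ((d : ℝ) + 1) / 2 - 1) (a := 2 / 5) (c := c / 2) (by linarith) (by linarith)
    (by linarith) (by norm_num) (by linarith) (by linarith)
  rw [sub_add_cancel, div_div_div_cancel_right₀ two_ne_zero] at hscale
  generalize besselCliffordZero ((d : ℝ) / 2 - 1) = z at *
  generalize besselCliffordZero (((d : ℝ) + 1) / 2 - 1) = z' at *
  calc (d + 1 : ℝ) ^ 4 * z ^ d < 4 * d ^ 2 * (1 + c / d) ^ d * Y * z ^ d := by gcongr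
    _ = 4 * d ^ 2 * (Y * ((1 + c / d) * z) ^ d) := by rw [mul_pow]; ring
    _ ≤ 4 * d ^ 2 * (z' * z' ^ d) := by gcongr
    _ = 4 * d ^ 2 * z' ^ (d + 1) := by ring

lemma pow_mul_besselCliffordZero_lt_of_le (hd : 2 ≤ d) (hd' : d ≤ 17) :
    (d + 1 : ℝ) ^ 4 * besselCliffordZero (d / 2 - 1) ^ d <
      4 * d ^ 2 * besselCliffordZero ((d + 1) / 2 - 1) ^ (d + 1) := by
  obtain rfl | hd3 := hd.eq_or_lt
  · refine pow_mul_besselCliffordZero_lt_of_mul (c := 1) (Y := π ^ 2 / 4) le_rfl zero_le_one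
      (by norm_num) ?_ ?_
    · norm_num [← besselCliffordZero_half]
    · norm_num
      nlinarith [pi_gt_three]
  · have hd3' : (3 : ℝ) ≤ d := by exact_mod_cast hd3
    have hY := add_two_mul_add_three_le_four_mul_besselCliffordZero
      (ν := ((d : ℝ) + 1) / 2 - 1) (by linarith)
    have hY' : ((d : ℝ) + 3) * (d + 5) / 16 ≤ besselCliffordZero ((d + 1) / 2 - 1) := by linarith
    -- The largest `c` that the comparison allows increases with `d`: about `1.14` at `d = 3` and
    -- `1.25` at `d = 7`.
    rcases le_or_gt d 6 with h6 | h6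
    · refine pow_mul_besselCliffordZero_lt_of_mul (c := 11 / 10) hd (by norm_num)
        (by linarith) hY' ?_
      interval_cases d <;> norm_num
    · have h7 : (7 : ℝ) ≤ d := by exact_mod_cast h6
      refine pow_mul_besselCliffordZero_lt_of_mul (c := 5 / 4) hd (by norm_num)
        (by linarith) hY' ?_
      interval_cases d <;> norm_num

lemma pow_mul_besselCliffordZero_lt_of_ge (hd : 18 ≤ d) :
    (d + 1 : ℝ) ^ 4 * besselCliffordZero (d / 2 - 1) ^ d <
      4 * d ^ 2 * besselCliffordZero ((d + 1) / 2 - 1) ^ (d + 1) := by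
  have hd18 : (18 : ℝ) ≤ d := by exact_mod_cast hd
  have hz := besselCliffordZero_pos (ν := (d : ℝ) / 2 - 1) (by linarith)
  have hgap : 0 ≤ (2 * (d : ℝ) - 3) / 16 := by linarith
  have hshift : besselCliffordZero (d / 2 - 1) + (2 * (d : ℝ) - 3) / 16 ≤
      besselCliffordZero ((d + 1) / 2 - 1) := by
    convert besselCliffordZero_add_le (μ := (d : ℝ) / 2 - 1) (ν := ((d : ℝ) + 1) / 2 - 1)
      (by linarith) (by linarith) (by linarith) using 2
    ring
  have hnum : (d + 1 : ℝ) ^ 4 < 4 * d ^ 2 * (exp 1 * (d * ((2 * d - 3) / 16))) := by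
    have hpoly : (d + 1 : ℝ) ^ 4 < 4 * d ^ 2 * (2.718 * (d * ((2 * d - 3) / 16))) := by
      obtain ⟨t, ht⟩ := exists_add_of_le hd18
      have ht0 : 0 ≤ t := by linarith
      rw [ht, ← sub_pos]
      ring_nf
      positivity
    have hexp : 2.718 ≤ exp 1 := by linarith [exp_one_gt_d9]
    exact hpoly.trans_le (by gcongr)
  have hexp := exp_one_mul_mul_pow_le_add_pow_succ hz hgap d
  generalize besselCliffordZero ((d : ℝ) / 2 - 1) = z at *
  generalize besselCliffordZero (((d : ℝ) + 1) / 2 - 1) = z' at *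
  calc (d + 1 : ℝ) ^ 4 * z ^ d < 4 * d ^ 2 * (exp 1 * (d * ((2 * d - 3) / 16))) * z ^ d := by gcongr
    _ = 4 * d ^ 2 * (exp 1 * (d * ((2 * d - 3) / 16) * z ^ d)) := by ring
    _ ≤ 4 * d ^ 2 * (z + (2 * d - 3) / 16) ^ (d + 1) := by gcongr
    _ ≤ 4 * d ^ 2 * z' ^ (d + 1) := by gcongr

lemma sq_mul_sqrt_besselCliffordZero_pow_lt (hd : 2 ≤ d) :
    (d + 1 : ℝ) ^ 2 * √(besselCliffordZero (d / 2 - 1)) ^ d <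
      2 * d * √(besselCliffordZero ((d + 1) / 2 - 1)) ^ (d + 1) := by
  have hd2 : (2 : ℝ) ≤ d := by exact_mod_cast hd
  have hlt : (d + 1 : ℝ) ^ 4 * besselCliffordZero (d / 2 - 1) ^ d <
      4 * d ^ 2 * besselCliffordZero ((d + 1) / 2 - 1) ^ (d + 1) := by
    rcases le_or_gt d 17 with h | h
    · exact pow_mul_besselCliffordZero_lt_of_le hd h
    · exact pow_mul_besselCliffordZero_lt_of_ge h
  have hsq {z : ℝ} (hz : 0 < z) (k : ℕ) : (√z ^ k) ^ 2 = z ^ k := by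
    rw [pow_right_comm, sq_sqrt hz.le]
  refine lt_of_pow_lt_pow_left₀ 2 (by positivity) ?_
  rw [mul_pow _ (√_ ^ d), mul_pow _ (√_ ^ (d + 1)), hsq (besselCliffordZero_pos (by linarith)),
    hsq (besselCliffordZero_pos (by linarith))]
  linarith

end KeyInequality

section Pleijel

lemma besselJ_eq_rpow_mul_besselClifford (ν : ℝ) {x : ℝ} (hx : 0 < x) :
    besselJ ν x = (x / 2) ^ ν * besselClifford ν (x ^ 2 / 4) := by
  rw [besselJ, besselClifford, ← tsum_mul_left]
  congr 1
  ext k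
  rw [besselCliffordTerm, show x ^ 2 / 4 = (x / 2) ^ 2 by ring, neg_pow ((x / 2) ^ 2),
    rpow_add (half_pos hx), rpow_mul (half_pos hx).le, rpow_natCast, rpow_two]
  ring

lemma besselJ_eq_zero_iff (ν : ℝ) {x : ℝ} (hx : 0 < x) :
    besselJ ν x = 0 ↔ besselClifford ν (x ^ 2 / 4) = 0 := by
  rw [besselJ_eq_rpow_mul_besselClifford ν hx, mul_eq_zero,
    or_iff_right (rpow_pos_of_pos (half_pos hx) ν).ne']

lemma besselJZero1_eq_two_mul_sqrt {ν : ℝ} (hν : -1 < ν) :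
    besselJZero1 ν = 2 * √(besselCliffordZero ν) := by
  have hz := besselCliffordZero_pos hν
  have hsq : (2 * √(besselCliffordZero ν)) ^ 2 / 4 = besselCliffordZero ν := by
    rw [mul_pow, sq_sqrt hz.le]
    ring
  refine IsLeast.csInf_eq ⟨⟨by positivity, ?_⟩, fun r ⟨hr, hr0⟩ ↦ ?_⟩
  · rw [besselJ_eq_zero_iff ν (by positivity), hsq, besselClifford_besselCliffordZero hν]
  · have hle := (isLeast_besselCliffordZero hν).2
      ⟨by positivity, (besselJ_eq_zero_iff ν hr).1 hr0⟩
    exact (pow_le_pow_iff_left₀ (by positivity) hr.le two_ne_zero).1 (by linarith)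

lemma pleijelGamma_eq {d : ℕ} (hd : 0 < d) :
    pleijelGamma d =
      d ^ 2 * Gamma (d / 2) ^ 2 / (4 * √(besselCliffordZero (d / 2 - 1)) ^ d) := by
  have hd0 : (0 : ℝ) < d := by exact_mod_cast hd
  have hν : -1 < (d : ℝ) / 2 - 1 := by linarith
  have hr := (sqrt_pos.2 (besselCliffordZero_pos hν)).ne'
  rw [pleijelGamma, besselJZero1_eq_two_mul_sqrt hν, rpow_natCast, rpow_sub two_pos, rpow_natCast,
    rpow_two, mul_pow]
  field_simp [hr]
  norm_num

lemma Gamma_add_half_sq_le {x : ℝ} (hx : 0 < x) : Gamma (x + 1 / 2) ^ 2 ≤ x * Gamma x ^ 2 := by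
  have h := Gamma_mul_add_mul_le_rpow_Gamma_mul_rpow_Gamma hx (t := x + 1) (by positivity)
    (a := 1 / 2) (b := 1 / 2) (by norm_num) (by norm_num) (by norm_num)
  have hG := Gamma_pos_of_pos hx
  rw [show 1 / 2 * x + 1 / 2 * (x + 1) = x + 1 / 2 by ring, ← sqrt_eq_rpow, ← sqrt_eq_rpow,
    Gamma_add_one hx.ne', ← sqrt_mul hG.le] at h
  calc Gamma (x + 1 / 2) ^ 2 ≤ √(Gamma x * (x * Gamma x)) ^ 2 :=
        pow_le_pow_left₀ (Gamma_pos_of_pos (by positivity)).le h 2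
    _ = x * Gamma x ^ 2 := by rw [sq_sqrt (by positivity)]; ring

end Pleijel

theorem pleijelGamma_strict_anti (d : ℕ) (hd : 2 ≤ d) :
    pleijelGamma (d + 1) < pleijelGamma d := by
  have hd0 : (2 : ℝ) ≤ d := by exact_mod_cast hd
  have hGamma := Gamma_add_half_sq_le (x := (d : ℝ) / 2) (by positivity)
  have hkey := sq_mul_sqrt_besselCliffordZero_pow_lt hd
  have hz := besselCliffordZero_pos (ν := (d : ℝ) / 2 - 1) (by linarith)
  have hz' := besselCliffordZero_pos (ν := ((d : ℝ) + 1) / 2 - 1) (by linarith)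
  have hG : 0 < Gamma ((d : ℝ) / 2) := Gamma_pos_of_pos (by positivity)
  rw [← add_div] at hGamma
  rw [pleijelGamma_eq d.succ_pos, pleijelGamma_eq (by omega), Nat.cast_succ,
    div_lt_div_iff₀ (by positivity) (by positivity)]
  set r := √(besselCliffordZero ((d : ℝ) / 2 - 1))
  set r' := √(besselCliffordZero (((d : ℝ) + 1) / 2 - 1))
  calc ((d : ℝ) + 1) ^ 2 * Gamma ((d + 1) / 2) ^ 2 * (4 * r ^ d)
      ≤ (d + 1) ^ 2 * (d / 2 * Gamma (d / 2) ^ 2) * (4 * r ^ d) := by gcongr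
    _ = 2 * d * Gamma (d / 2) ^ 2 * ((d + 1) ^ 2 * r ^ d) := by ring
    _ < 2 * d * Gamma (d / 2) ^ 2 * (2 * d * r' ^ (d + 1)) := by gcongr
    _ = d ^ 2 * Gamma (d / 2) ^ 2 * (4 * r' ^ (d + 1)) := by ring
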